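/- In the Nehari setting, for each w ∈ H¹(V)\{0} let s_w > 0 be the unique value with Φ'(s_w w)(s_w w) = 0. Then for each compact subset K of the unit sphere S = {w ∈ H¹(V) : ‖w‖ = 1} (norm topology), there exists a constant C_K such that s_w ≤ C_K for all w ∈ K. -/

import Mathlib

open scoped ENNReal

noncomputable section

/-- `H¹(V)`: as a set, the ℓ²-summable real functions on the vertex set;
the `H¹` norm is equivalent to the ℓ² norm by the uniform degree bound. -/
abbrev H1 (Vtx : Type*) := lp (fun _ : Vtx => ℝ) 2

variable {Vtx : Type*}

/-- `Γ(u,v)(x) = (1/2) Σ_{y∼x} (u(y)-u(x))(v(y)-v(x))`. -/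
def gammaProd (adj : Vtx → Vtx → Prop) (u v : Vtx → ℝ) (x : Vtx) : ℝ :=
  (1/2) * ∑' y : {y : Vtx // adj x y}, (u y.1 - u x) * (v y.1 - v x)

/-- `|∇u|²(x) = (1/2) Σ_{y∼x} (u(y)-u(x))²`. -/
def gradSq (adj : Vtx → Vtx → Prop) (u : Vtx → ℝ) (x : Vtx) : ℝ :=
  gammaProd adj u u x

/-- `Δu(x) = Σ_{y∼x} (u(y)-u(x))`. -/
def graphLap (adj : Vtx → Vtx → Prop) (u : Vtx → ℝ) (x : Vtx) : ℝ :=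
  ∑' y : {y : Vtx // adj x y}, (u y.1 - u x)

/-- the norm `‖u‖` induced by the potential `V`:
`‖u‖² = Σ_x (|∇u|²(x) + V(x)u(x)²)`. -/
def nrmV (adj : Vtx → Vtx → Prop) (Vp : Vtx → ℝ) (u : Vtx → ℝ) : ℝ :=
  Real.sqrt (∑' x, (gradSq adj u x + Vp x * (u x)^2))

/-- the `V`-norm of an element of `H¹`. -/
def nrmH (adj : Vtx → Vtx → Prop) (Vp : Vtx → ℝ) (u : H1 Vtx) : ℝ :=
  nrmV adj Vp (fun y => u y)

/-- `⟨u,v⟩ = Σ_x (Γ(u,v)(x) + V(x)u(x)v(x))`. -/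
def iprodH (adj : Vtx → Vtx → Prop) (Vp : Vtx → ℝ) (u v : H1 Vtx) : ℝ :=
  ∑' x, (gammaProd adj (fun y => u y) (fun y => v y) x + Vp x * u x * v x)

/-- the variational functional `Φ(u) = ½‖u‖² − Σ_x F(x,u(x))`. -/
def PhiF (adj : Vtx → Vtx → Prop) (Vp : Vtx → ℝ) (F : Vtx → ℝ → ℝ) (u : H1 Vtx) : ℝ :=
  (1/2) * ∑' x, (gradSq adj (fun y => u y) x + Vp x * (u x)^2) - ∑' x, F x (u x)

/-- the Nehari manifold `N = {u ∈ H¹\{0} : Φ'(u)u = 0}`. -/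
def Nehari (adj : Vtx → Vtx → Prop) (Vp : Vtx → ℝ) (F : Vtx → ℝ → ℝ) : Set (H1 Vtx) :=
  {u | u ≠ 0 ∧ fderiv ℝ (PhiF adj Vp F) u u = 0}

/-- adjacency of the lattice graph `ℤ^N`. -/
def adjZ (N : ℕ) (x y : Fin N → ℤ) : Prop := (∑ i, (x i - y i).natAbs) = 1

end

/-!
Since `f(x,·)/|·|` is monotone and tends to `0` at `0`, one has `f(x,t)t ≥ 0` and
`f(x,t)t ≥ 2F(x,t)`. Keeping a single vertex `x₀` of the sum in `Φ'(u)u = ‖u‖² - Σ f(x,u(x))u(x)`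
therefore gives `Φ'(u)u ≤ B‖u‖²_{ℓ²} - 2F(x₀,u(x₀))`. If `w₀(x₀) ≠ 0`, superquadraticity of
`F(x₀,·)` makes this negative at `u = sw` for all large `s`, uniformly for `w` near `w₀`, and
compactness makes the bound on `s` uniform over `K`.

The formula for `Φ'` requires Fréchet differentiability of `u ↦ Σ F(x,u(x))`, which follows from the
mean value theorem at each vertex and continuity of `u ↦ f(·,u(·))` on `ℓ²`; the latter holds
because outside a finite set all nearby functions are small, and there `|f(x,t)| ≤ A|t|`.
-/

open Bornology Filter Set Topology

namespace H1

variable {ι : Type*}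

theorem hasSum_sq (u : H1 ι) : HasSum (fun x => u x ^ 2) (‖u‖ ^ 2) := by
  simpa using lp.hasSum_norm (p := 2) (by norm_num) u

theorem norm_sq_eq_sum_add_tsum_compl (u : H1 ι) (S : Finset ι) :
    ‖u‖ ^ 2 = ∑ x ∈ S, u x ^ 2 + ∑' x : { x // x ∉ S }, u x ^ 2 := by
  rw [← (hasSum_sq u).tsum_eq, ← (hasSum_sq u).summable.sum_add_tsum_subtype_compl S]

theorem summable_compl_sq (u : H1 ι) (S : Finset ι) :
    Summable fun x : { x // x ∉ S } => u x ^ 2 :=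
  (hasSum_sq u).summable.subtype _

theorem tsum_compl_sq_le (u : H1 ι) (S : Finset ι) :
    ∑' x : { x // x ∉ S }, u x ^ 2 ≤ ‖u‖ ^ 2 := by
  rw [norm_sq_eq_sum_add_tsum_compl u S]
  exact le_add_of_nonneg_left (Finset.sum_nonneg fun x _ => sq_nonneg (u x))

theorem memℓp_of_summable_sq {u : ι → ℝ} (hu : Summable fun x => u x ^ 2) : Memℓp u 2 :=
  memℓp_gen (by simpa using hu)

theorem tendsto_cofinite_zero (u : H1 ι) : Tendsto u cofinite (𝓝 0) := by
  have h := (hasSum_sq u).summable.tendsto_cofinite_zero.sqrt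
  simp only [Real.sqrt_sq_eq_abs, Real.sqrt_zero] at h
  exact tendsto_zero_iff_abs_tendsto_zero _ |>.2 h

theorem continuous_eval (x : ι) : Continuous fun u : H1 ι => u x :=
  (lp.evalCLM ℝ (fun _ : ι => ℝ) (p := 2) x).continuous

end H1

theorem exists_mem_uIcc_sub_eq_mul {G g : ℝ → ℝ} (hG : ∀ t, HasDerivAt G (g t) t) (a b : ℝ) :
    ∃ ξ ∈ uIcc a b, G b - G a = g ξ * (b - a) := by
  have hcont : Continuous G := continuous_iff_continuousAt.2 fun t => (hG t).continuousAt
  wlog hab : a ≤ b generalizing a b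
  · obtain ⟨ξ, hξ, h⟩ := this b a (le_of_not_ge hab)
    exact ⟨ξ, uIcc_comm a b ▸ hξ, by linear_combination -h⟩
  rcases hab.eq_or_lt with rfl | hlt
  · exact ⟨a, left_mem_uIcc, by simp⟩
  · obtain ⟨ξ, hξ, h⟩ := exists_hasDerivAt_eq_slope G g hlt hcont.continuousOn fun t _ => hG t
    exact ⟨ξ, Icc_subset_uIcc (Ioo_subset_Icc_self hξ),
      ((eq_div_iff (sub_pos.2 hlt).ne').1 h).symm⟩

section Nemytskii

variable {ι : Type*} {G g : ι → ℝ → ℝ} {A : ℝ}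

theorem memℓp_nemytskii (hg : ∀ᶠ t in 𝓝 0, ∀ x, |g x t| ≤ A * |t|) (u : H1 ι) :
    Memℓp (fun x => g x (u x)) 2 := by
  refine H1.memℓp_of_summable_sq
    (.of_norm_bounded_eventually ((H1.hasSum_sq u).summable.mul_left (A ^ 2)) ?_)
  filter_upwards [(H1.tendsto_cofinite_zero u).eventually hg] with x hx
  rw [norm_pow, Real.norm_eq_abs, ← sq_abs (u x), ← mul_pow]
  exact pow_le_pow_left₀ (abs_nonneg _) (hx x) 2

/-- The Nemytskii (superposition) operator `u ↦ g(·, u(·))` on `H¹`, which is well defined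
when `g(x, t) = O(t)` as `t → 0` uniformly in `x`. -/
noncomputable def nemytskii (hg : ∀ᶠ t in 𝓝 0, ∀ x, |g x t| ≤ A * |t|) (u : H1 ι) : H1 ι :=
  ⟨fun x => g x (u x), memℓp_nemytskii hg u⟩

@[simp]
theorem nemytskii_apply (hg : ∀ᶠ t in 𝓝 0, ∀ x, |g x t| ≤ A * |t|) (u : H1 ι) (x : ι) :
    nemytskii hg u x = g x (u x) := rfl

theorem sq_sub_le_of_abs_le {a b s t : ℝ} (ha : |a| ≤ A * |s|) (hb : |b| ≤ A * |t|) :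
    (a - b) ^ 2 ≤ 2 * A ^ 2 * (2 * (s - t) ^ 2 + 3 * t ^ 2) := by
  have ha' : a ^ 2 ≤ A ^ 2 * s ^ 2 := by
    simpa only [mul_pow, sq_abs] using pow_le_pow_left₀ (abs_nonneg a) ha 2
  have hb' : b ^ 2 ≤ A ^ 2 * t ^ 2 := by
    simpa only [mul_pow, sq_abs] using pow_le_pow_left₀ (abs_nonneg b) hb 2
  have hs : A ^ 2 * s ^ 2 ≤ A ^ 2 * (2 * (s - t) ^ 2 + 2 * t ^ 2) := by
    gcongr
    linarith [sq_nonneg (s - 2 * t)]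
  linarith [sq_nonneg (a + b)]

theorem eventually_norm_nemytskii_sub_sq_le (hg : ∀ᶠ t in 𝓝 0, ∀ x, |g x t| ≤ A * |t|)
    (u : H1 ι) :
    ∀ᶠ S : Finset ι in atTop, ∀ᶠ v in 𝓝 u, ‖nemytskii hg v - nemytskii hg u‖ ^ 2 ≤
      ∑ x ∈ S, (g x (v x) - g x (u x)) ^ 2 +
        2 * A ^ 2 * (2 * ‖v - u‖ ^ 2 + 3 * ∑' x : { x // x ∉ S }, u x ^ 2) := by
  obtain ⟨δ, hδ, hgδ⟩ := Metric.eventually_nhds_iff.1 hg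
  have hu : {x | ¬ |u x| < δ / 2}.Finite := by
    simpa using Metric.tendsto_nhds.1 (H1.tendsto_cofinite_zero u) (δ / 2) (half_pos hδ)
  filter_upwards [eventually_ge_atTop hu.toFinset] with S hS
  filter_upwards [Metric.ball_mem_nhds u (half_pos hδ)] with v hv
  have hux (x : { x // x ∉ S }) : |u x| < δ / 2 := by
    by_contra h
    exact x.2 (hS (hu.mem_toFinset.2 h))
  have hvux (x : ι) : |v x - u x| < δ / 2 :=
    (lp.norm_apply_le_norm two_ne_zero (v - u) x).trans_lt (mem_ball_iff_norm.1 hv)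
  have hvx (x : { x // x ∉ S }) : |v x| < δ := by
    linarith [hux x, hvux x, abs_sub_abs_le_abs_sub (v x) (u x)]
  have hterm (x : { x // x ∉ S }) : (nemytskii hg v - nemytskii hg u) x ^ 2 ≤
      2 * A ^ 2 * (2 * (v - u) x ^ 2 + 3 * u x ^ 2) :=
    sq_sub_le_of_abs_le (hgδ (by simpa using hvx x) x)
      (hgδ (by simpa using (hux x).trans (half_lt_self hδ)) x)
  have hgS := H1.summable_compl_sq (nemytskii hg v - nemytskii hg u) S
  have hvuS := H1.summable_compl_sq (v - u) S
  have huS := H1.summable_compl_sq u S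
  have hsum := ((hvuS.mul_left 2).add (huS.mul_left 3)).mul_left (2 * A ^ 2)
  calc ‖nemytskii hg v - nemytskii hg u‖ ^ 2
      = ∑ x ∈ S, (g x (v x) - g x (u x)) ^ 2 +
          ∑' x : { x // x ∉ S }, (g x (v x) - g x (u x)) ^ 2 :=
        H1.norm_sq_eq_sum_add_tsum_compl (nemytskii hg v - nemytskii hg u) S
    _ ≤ ∑ x ∈ S, (g x (v x) - g x (u x)) ^ 2 +
          ∑' x : { x // x ∉ S }, 2 * A ^ 2 * (2 * (v - u) x ^ 2 + 3 * u x ^ 2) :=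
        add_le_add le_rfl (hgS.tsum_le_tsum hterm hsum)
    _ ≤ _ := by
        rw [tsum_mul_left, (hvuS.mul_left 2).tsum_add (huS.mul_left 3), tsum_mul_left,
          tsum_mul_left]
        gcongr
        exact H1.tsum_compl_sq_le (v - u) S

theorem continuous_nemytskii (hcont : ∀ x, Continuous (g x))
    (hg : ∀ᶠ t in 𝓝 0, ∀ x, |g x t| ≤ A * |t|) : Continuous (nemytskii hg) := by
  refine continuous_iff_continuousAt.2 fun u => Metric.tendsto_nhds.2 fun ε hε => ?_
  have htail : Tendsto (fun S : Finset ι => 2 * A ^ 2 * (3 * ∑' x : { x // x ∉ S }, u x ^ 2))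
      atTop (𝓝 0) := by
    simpa using ((tendsto_tsum_compl_atTop_zero fun x => u x ^ 2).const_mul 3).const_mul
      (2 * A ^ 2)
  obtain ⟨S, hS, hSε⟩ := ((eventually_norm_nemytskii_sub_sq_le hg u).and
    (htail.eventually_lt_const (pow_pos hε 2))).exists
  have hhead : Tendsto (fun v : H1 ι => ∑ x ∈ S, (g x (v x) - g x (u x)) ^ 2 +
        2 * A ^ 2 * (2 * ‖v - u‖ ^ 2 + 3 * ∑' x : { x // x ∉ S }, u x ^ 2)) (𝓝 u)
      (𝓝 (2 * A ^ 2 * (3 * ∑' x : { x // x ∉ S }, u x ^ 2))) := by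
    have hgx (x : ι) : Continuous fun v : H1 ι => (g x (v x) - g x (u x)) ^ 2 :=
      (((hcont x).comp (H1.continuous_eval x)).sub continuous_const).pow 2
    refine Continuous.tendsto' ?_ _ _ (by simp)
    exact (continuous_finsetSum S fun x _ => hgx x).add (by fun_prop)
  filter_upwards [hS, hhead.eventually_lt_const hSε] with v hv hvε
  rw [dist_eq_norm]
  exact lt_of_pow_lt_pow_left₀ 2 hε.le (hv.trans_lt hvε)

theorem exists_forall_sub_eq_mul (hG : ∀ x t, HasDerivAt (G x) (g x t) t) (u v : H1 ι) :
    ∃ ξ : H1 ι, ‖ξ - u‖ ≤ ‖v - u‖ ∧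
      ∀ x, G x (v x) - G x (u x) = g x (ξ x) * (v x - u x) := by
  choose ξ hξ hGξ using fun x => exists_mem_uIcc_sub_eq_mul (hG x) (u x) (v x)
  have hle (x : ι) : ‖ξ x - u x‖ ≤ ‖(v - u) x‖ := abs_sub_left_of_mem_uIcc (hξ x)
  let d : H1 ι := ⟨fun x => ξ x - u x, (lp.memℓp (v - u)).mono' hle⟩
  have hd (x : ι) : (u + d) x = ξ x := add_sub_cancel (u x) (ξ x)
  refine ⟨u + d, ?_, fun x => by rw [hd, hGξ]⟩
  rw [add_sub_cancel_left]
  exact lp.norm_mono two_ne_zero hle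

theorem summable_comp (hG : ∀ x t, HasDerivAt (G x) (g x t) t) (hG0 : ∀ x, G x 0 = 0)
    (hg : ∀ᶠ t in 𝓝 0, ∀ x, |g x t| ≤ A * |t|) (u : H1 ι) : Summable fun x => G x (u x) := by
  obtain ⟨ξ, -, hξ⟩ := exists_forall_sub_eq_mul hG 0 u
  refine (lp.summable_inner (𝕜 := ℝ) u (nemytskii hg ξ)).congr fun x => ?_
  simpa [hG0, eq_comm] using hξ x

theorem hasFDerivAt_tsum_comp (hG : ∀ x t, HasDerivAt (G x) (g x t) t) (hG0 : ∀ x, G x 0 = 0)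
    (hcont : ∀ x, Continuous (g x)) (hg : ∀ᶠ t in 𝓝 0, ∀ x, |g x t| ≤ A * |t|) (u : H1 ι) :
    HasFDerivAt (fun v : H1 ι => ∑' x, G x (v x)) (innerSL ℝ (nemytskii hg u)) u := by
  refine .of_isLittleO (.of_bound fun ε hε => ?_)
  obtain ⟨r, hr, hball⟩ := Metric.continuous_iff.1 (continuous_nemytskii hcont hg) u ε hε
  filter_upwards [Metric.ball_mem_nhds u hr] with v hv
  obtain ⟨ξ, hξ, hmean⟩ := exists_forall_sub_eq_mul hG u v
  have hsum : ∑' x, G x (v x) - ∑' x, G x (u x) = inner ℝ (nemytskii hg ξ) (v - u) := by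
    rw [← (summable_comp hG hG0 hg v).tsum_sub (summable_comp hG hG0 hg u), lp.inner_eq_tsum]
    refine tsum_congr fun x => ?_
    rw [hmean x]
    exact mul_comm _ _
  have hNξ : ‖nemytskii hg ξ - nemytskii hg u‖ ≤ ε := by
    rw [← dist_eq_norm]
    exact (hball ξ ((dist_eq_norm ξ u).trans_le hξ |>.trans_lt (mem_ball_iff_norm.1 hv))).le
  calc ‖∑' x, G x (v x) - ∑' x, G x (u x) - innerSL ℝ (nemytskii hg u) (v - u)‖
      = ‖inner ℝ (nemytskii hg ξ - nemytskii hg u) (v - u)‖ := by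
        rw [hsum, innerSL_apply_apply, inner_sub_left]
    _ ≤ ‖nemytskii hg ξ - nemytskii hg u‖ * ‖v - u‖ := norm_inner_le_norm _ _
    _ ≤ ε * ‖v - u‖ := by gcongr

end Nemytskii

section Gradient

variable {Vtx : Type*} {adj : Vtx → Vtx → Prop} {D : ℕ}

/-- The oriented edges of the graph: a vertex together with one of its neighbours. -/
abbrev OrientedEdge (adj : Vtx → Vtx → Prop) := Σ x, { y // adj x y }

/-- Orientation reversal on the edges of a symmetric graph, used to exchange sources and
targets in sums over edges. -/
def OrientedEdge.reverse (hsym : ∀ x y, adj x y → adj y x) :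
    OrientedEdge adj ≃ OrientedEdge adj where
  toFun e := ⟨e.2, e.1, hsym _ _ e.2.2⟩
  invFun e := ⟨e.2, e.1, hsym _ _ e.2.2⟩
  left_inv _ := rfl
  right_inv _ := rfl

theorem exists_hasSum_sq_source (hfin : ∀ x, {y | adj x y}.Finite)
    (hdeg : ∀ x, {y | adj x y}.ncard ≤ D) (u : H1 Vtx) :
    ∃ S ≤ D * ‖u‖ ^ 2, HasSum (fun e : OrientedEdge adj => u e.1 ^ 2) S := by
  have (x : Vtx) : Finite { y // adj x y } := hfin x
  have hfiber (x : Vtx) :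
      ∑' _ : { y // adj x y }, u x ^ 2 = {y | adj x y}.ncard * u x ^ 2 := by
    rw [tsum_const, nsmul_eq_mul]
    rfl
  have hle (x : Vtx) : ∑' _ : { y // adj x y }, u x ^ 2 ≤ D * u x ^ 2 := by
    rw [hfiber]
    gcongr
    exact hdeg x
  have hD := (H1.hasSum_sq u).mul_left (D : ℝ)
  have hsum : Summable fun x => ∑' _ : { y // adj x y }, u x ^ 2 :=
    .of_nonneg_of_le (fun x => tsum_nonneg fun _ => sq_nonneg _) hle hD.summable
  have hedge : Summable fun e : OrientedEdge adj => u e.1 ^ 2 :=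
    (summable_sigma_of_nonneg fun _ => sq_nonneg _).2 ⟨fun _ => .of_finite, hsum⟩
  refine ⟨_, ?_, hedge.hasSum⟩
  rw [hedge.tsum_sigma]
  exact hasSum_le hle hsum.hasSum hD

theorem exists_hasSum_sq_sub (hsym : ∀ x y, adj x y → adj y x)
    (hfin : ∀ x, {y | adj x y}.Finite) (hdeg : ∀ x, {y | adj x y}.ncard ≤ D) (u : H1 Vtx) :
    ∃ S ≤ 4 * D * ‖u‖ ^ 2, HasSum (fun e : OrientedEdge adj => (u e.2 - u e.1) ^ 2) S := by
  obtain ⟨S, hS, hsource⟩ := exists_hasSum_sq_source hfin hdeg u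
  have htarget : HasSum (fun e : OrientedEdge adj => u e.2 ^ 2) S :=
    (OrientedEdge.reverse hsym).hasSum_iff.2 hsource
  have hbound := (htarget.add hsource).mul_left 2
  have hle (e : OrientedEdge adj) : (u e.2 - u e.1) ^ 2 ≤ 2 * (u e.2 ^ 2 + u e.1 ^ 2) := by
    linarith [sq_nonneg (u e.2 + u e.1)]
  have hsum := Summable.of_nonneg_of_le (fun _ => sq_nonneg _) hle hbound.summable
  exact ⟨_, (hasSum_le hle hsum.hasSum hbound).trans (by linarith), hsum.hasSum⟩

theorem memℓp_edge_sub (hsym : ∀ x y, adj x y → adj y x) (hfin : ∀ x, {y | adj x y}.Finite)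
    (hdeg : ∀ x, {y | adj x y}.ncard ≤ D) (u : H1 Vtx) :
    Memℓp (fun e : OrientedEdge adj => u e.2 - u e.1) 2 :=
  let ⟨_, _, h⟩ := exists_hasSum_sq_sub hsym hfin hdeg u
  H1.memℓp_of_summable_sq h.summable

variable (hsym : ∀ x y, adj x y → adj y x) (hfin : ∀ x, {y | adj x y}.Finite)
  (hdeg : ∀ x, {y | adj x y}.ncard ≤ D)

theorem norm_sq_edge_sub_le (u : H1 Vtx) :
    ‖(⟨_, memℓp_edge_sub hsym hfin hdeg u⟩ : H1 (OrientedEdge adj))‖ ^ 2 ≤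
      4 * D * ‖u‖ ^ 2 := by
  obtain ⟨S, hS, hsum⟩ := exists_hasSum_sq_sub hsym hfin hdeg u
  rw [← (H1.hasSum_sq _).tsum_eq]
  exact hsum.tsum_eq.trans_le hS

/-- The discrete gradient `(∇u)(x, y) = u(y) - u(x)`, as a bounded operator into the square
summable functions on oriented edges. -/
noncomputable def edgeGradient : H1 Vtx →L[ℝ] H1 (OrientedEdge adj) :=
  LinearMap.mkContinuous
    { toFun u := ⟨_, memℓp_edge_sub hsym hfin hdeg u⟩
      map_add' u v := lp.ext <| funext fun e => add_sub_add_comm (u e.2) (v e.2) (u e.1) (v e.1)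
      map_smul' c u := lp.ext <| funext fun e => (mul_sub c (u e.2) (u e.1)).symm }
    (√(4 * D)) fun u => by
      refine le_of_sq_le_sq ?_ (by positivity)
      rw [mul_pow, Real.sq_sqrt (by positivity)]
      exact norm_sq_edge_sub_le hsym hfin hdeg u

theorem edgeGradient_apply (u : H1 Vtx) (e : OrientedEdge adj) :
    edgeGradient hsym hfin hdeg u e = u e.2 - u e.1 := rfl

theorem norm_edgeGradient_sq_le (u : H1 Vtx) :
    ‖edgeGradient hsym hfin hdeg u‖ ^ 2 ≤ 4 * D * ‖u‖ ^ 2 :=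
  norm_sq_edge_sub_le hsym hfin hdeg u

theorem hasSum_gradSq (u : H1 Vtx) :
    HasSum (fun x => gradSq adj u x) (1 / 2 * ‖edgeGradient hsym hfin hdeg u‖ ^ 2) := by
  have hfiber (x : Vtx) : Summable fun y : { y // adj x y } => (u y - u x) * (u y - u x) :=
    have : Finite { y // adj x y } := hfin x
    .of_finite
  have hsum := H1.hasSum_sq (edgeGradient hsym hfin hdeg u)
  simp only [edgeGradient_apply, sq (_ - _)] at hsum
  exact (hsum.sigma fun x => (hfiber x).hasSum).mul_left (1 / 2)

end Gradient

section Nonlinearity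

variable {f : ℝ → ℝ} {t : ℝ}

theorem nonneg_of_monotoneOn_div_abs (hsmall : f =o[𝓝 0] id)
    (hmono : MonotoneOn (fun t => f t / |t|) (Ioi 0)) (ht : 0 < t) : 0 ≤ f t := by
  have hlim : Tendsto (fun s => f s / |s|) (𝓝[>] 0) (𝓝 0) :=
    (hsmall.norm_right.tendsto_div_nhds_zero).mono_left nhdsWithin_le_nhds
  have hquot : 0 ≤ f t / |t| := by
    refine le_of_tendsto hlim ?_
    filter_upwards [Ioc_mem_nhdsGT ht] with s hs using hmono hs.1 ht hs.2
  simpa [ht.ne'] using mul_nonneg hquot (abs_nonneg t)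

theorem two_mul_integral_le_of_monotoneOn_div_abs (hf : Continuous f)
    (hmono : MonotoneOn (fun t => f t / |t|) (Ioi 0)) (ht : 0 < t) :
    2 * ∫ s in (0 : ℝ)..t, f s ≤ f t * t := by
  have hle (s : ℝ) (hs : s ∈ Ioo 0 t) : f s ≤ f t / t * s := by
    have h := hmono hs.1 ht hs.2.le
    simp only [abs_of_pos hs.1, abs_of_pos ht] at h
    exact (div_le_iff₀ hs.1).1 h
  have hint : ∫ s in (0 : ℝ)..t, f s ≤ ∫ s in (0 : ℝ)..t, f t / t * s :=
    intervalIntegral.integral_mono_on_of_le_Ioo ht.le (hf.intervalIntegrable _ _)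
      (Continuous.intervalIntegrable (by fun_prop) _ _) hle
  rw [intervalIntegral.integral_const_mul, integral_id] at hint
  calc 2 * ∫ s in (0 : ℝ)..t, f s ≤ 2 * (f t / t * ((t ^ 2 - 0 ^ 2) / 2)) := by gcongr
    _ = f t * t := by field_simp; ring

theorem monotoneOn_neg_comp_neg_div_abs (hmono : MonotoneOn (fun t => f t / |t|) (Iio 0)) :
    MonotoneOn (fun t => -f (-t) / |t|) (Ioi 0) := by
  intro s hs t ht hst
  have h := hmono (mem_Iio.2 (neg_lt_zero.2 ht)) (mem_Iio.2 (neg_lt_zero.2 hs)) (neg_le_neg hst)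
  simpa [neg_div] using h

theorem mul_self_nonneg_of_monotoneOn_div_abs (hsmall : f =o[𝓝 0] id)
    (hneg : MonotoneOn (fun t => f t / |t|) (Iio 0))
    (hpos : MonotoneOn (fun t => f t / |t|) (Ioi 0)) (t : ℝ) : 0 ≤ f t * t := by
  rcases lt_trichotomy t 0 with ht | rfl | ht
  · have hsmall' : (fun t => -f (-t)) =o[𝓝 0] id :=
      (hsmall.comp_tendsto (continuous_neg.tendsto' 0 0 neg_zero)).neg_left.of_neg_right
    have h := nonneg_of_monotoneOn_div_abs hsmall' (monotoneOn_neg_comp_neg_div_abs hneg)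
      (neg_pos.2 ht)
    rw [neg_neg] at h
    exact mul_nonneg_of_nonpos_of_nonpos (neg_nonneg.1 h) ht.le
  · rw [mul_zero]
  · exact mul_nonneg (nonneg_of_monotoneOn_div_abs hsmall hpos ht) ht.le

theorem two_mul_integral_le_mul_self (hf : Continuous f)
    (hneg : MonotoneOn (fun t => f t / |t|) (Iio 0))
    (hpos : MonotoneOn (fun t => f t / |t|) (Ioi 0)) (t : ℝ) :
    2 * ∫ s in (0 : ℝ)..t, f s ≤ f t * t := by
  rcases lt_trichotomy t 0 with ht | rfl | ht
  · have h := two_mul_integral_le_of_monotoneOn_div_abs (hf.comp continuous_neg).neg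
      (monotoneOn_neg_comp_neg_div_abs hneg) (neg_pos.2 ht)
    rw [Pi.neg_def] at h
    simpa [intervalIntegral.integral_symm t 0] using h
  · simp
  · exact two_mul_integral_le_of_monotoneOn_div_abs hf hpos ht

end Nonlinearity

section Functional

variable {Vtx : Type*} {adj : Vtx → Vtx → Prop} {D : ℕ} {Vp : Vtx → ℝ} {f F : Vtx → ℝ → ℝ}
  {A C : ℝ}

theorem eventually_abs_mul_le (hV : ∀ x, |Vp x| ≤ C) :
    ∀ᶠ t in 𝓝 (0 : ℝ), ∀ x, |Vp x * t| ≤ C * |t| :=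
  .of_forall fun t x => (abs_mul _ _).trans_le (by gcongr; exact hV x)

theorem eventually_abs_le_mul_abs (hcont : ∀ x, Continuous (f x))
    (hsmall : ∀ ε > 0, ∃ δ > 0, ∀ x t, t ≠ 0 → |t| < δ → |f x t| ≤ ε * |t|) {ε : ℝ}
    (hε : 0 < ε) : ∀ᶠ t in 𝓝 0, ∀ x, |f x t| ≤ ε * |t| := by
  obtain ⟨δ, hδ, hle⟩ := hsmall ε hε
  have hball : ∀ᶠ t : ℝ in 𝓝 0, |t| < δ :=
    (continuous_abs.tendsto' 0 0 abs_zero).eventually_lt_const hδ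
  filter_upwards [hball] with t ht x
  rcases eq_or_ne t 0 with rfl | h0
  · have hpunctured : ∀ᶠ s in 𝓝[≠] 0, |f x s| ≤ ε * |s| := by
      filter_upwards [hball.filter_mono nhdsWithin_le_nhds, self_mem_nhdsWithin] with s hs hs0
      exact hle x s hs0 hs
    exact le_of_tendsto_of_tendsto ((hcont x).abs.tendsto 0 |>.mono_left nhdsWithin_le_nhds)
      ((continuous_abs.const_mul ε).tendsto 0 |>.mono_left nhdsWithin_le_nhds) hpunctured
  · exact hle x t h0 ht

theorem isLittleO_id_of_forall_abs_le (hcont : ∀ x, Continuous (f x))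
    (hsmall : ∀ ε > 0, ∃ δ > 0, ∀ x t, t ≠ 0 → |t| < δ → |f x t| ≤ ε * |t|) (x : Vtx) :
    f x =o[𝓝 0] id :=
  .of_bound fun _ hε => (eventually_abs_le_mul_abs hcont hsmall hε).mono fun _ h => h x

theorem tendsto_div_sq_cobounded
    (hsuper : ∀ M : ℝ, ∃ R > 0, ∀ x t, R ≤ |t| → M ≤ F x t / t ^ 2) (x : Vtx) :
    Tendsto (fun t => F x t / t ^ 2) (cobounded ℝ) atTop := by
  refine tendsto_atTop.2 fun M => ?_
  obtain ⟨R, -, hR⟩ := hsuper M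
  filter_upwards [tendsto_norm_cobounded_atTop.eventually_ge_atTop R] with t ht using hR x t ht

theorem summable_potential (hV : ∀ x, |Vp x| ≤ C) (u : H1 Vtx) :
    Summable fun x => Vp x * u x ^ 2 := by
  refine .of_norm_bounded ((H1.hasSum_sq u).summable.mul_left C) fun x => ?_
  rw [Real.norm_eq_abs, abs_mul, abs_of_nonneg (sq_nonneg (u x))]
  gcongr
  exact hV x

theorem tsum_potential_le (hV : ∀ x, |Vp x| ≤ C) (u : H1 Vtx) :
    ∑' x, Vp x * u x ^ 2 ≤ C * ‖u‖ ^ 2 :=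
  hasSum_le (fun x => by gcongr; exact (le_abs_self _).trans (hV x))
    (summable_potential hV u).hasSum ((H1.hasSum_sq u).mul_left C)

theorem tsum_gradSq_add_potential (hsym : ∀ x y, adj x y → adj y x)
    (hfin : ∀ x, {y | adj x y}.Finite) (hdeg : ∀ x, {y | adj x y}.ncard ≤ D)
    (hV : ∀ x, |Vp x| ≤ C) (u : H1 Vtx) :
    ∑' x, (gradSq adj u x + Vp x * u x ^ 2) =
      1 / 2 * ‖edgeGradient hsym hfin hdeg u‖ ^ 2 + ∑' x, Vp x * u x ^ 2 :=
  ((hasSum_gradSq hsym hfin hdeg u).add (summable_potential hV u).hasSum).tsum_eq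

theorem tsum_gradSq_add_potential_le (hsym : ∀ x y, adj x y → adj y x)
    (hfin : ∀ x, {y | adj x y}.Finite) (hdeg : ∀ x, {y | adj x y}.ncard ≤ D)
    (hV : ∀ x, |Vp x| ≤ C) (u : H1 Vtx) :
    ∑' x, (gradSq adj u x + Vp x * u x ^ 2) ≤ (2 * D + C) * ‖u‖ ^ 2 := by
  rw [tsum_gradSq_add_potential hsym hfin hdeg hV u]
  linarith [norm_edgeGradient_sq_le hsym hfin hdeg u, tsum_potential_le hV u]

theorem hasFDerivAt_PhiF (hsym : ∀ x y, adj x y → adj y x)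
    (hfin : ∀ x, {y | adj x y}.Finite) (hdeg : ∀ x, {y | adj x y}.ncard ≤ D)
    (hV : ∀ x, |Vp x| ≤ C) (hcont : ∀ x, Continuous (f x))
    (hf : ∀ᶠ t in 𝓝 0, ∀ x, |f x t| ≤ A * |t|)
    (hF : ∀ x t, HasDerivAt (F x) (f x t) t) (hF0 : ∀ x, F x 0 = 0) (u : H1 Vtx) :
    HasFDerivAt (PhiF adj Vp F)
      ((1 / 2 : ℝ) •
          (innerSL ℝ (edgeGradient hsym hfin hdeg u)).comp (edgeGradient hsym hfin hdeg) +
        innerSL ℝ (nemytskii (eventually_abs_mul_le hV) u) - innerSL ℝ (nemytskii hf u)) u := by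
  have hV' (x : Vtx) (t : ℝ) : HasDerivAt (fun t => 1 / 2 * (Vp x * t ^ 2)) (Vp x * t) t := by
    refine (((hasDerivAt_pow 2 t).const_mul (Vp x)).const_mul (1 / 2)).congr_deriv ?_
    ring
  have hgrad := ((edgeGradient hsym hfin hdeg).hasFDerivAt (x := u)).norm_sq.const_mul (1 / 4 : ℝ)
  have hpot := hasFDerivAt_tsum_comp hV' (by simp) (fun x => by fun_prop)
    (eventually_abs_mul_le hV) u
  have hPhi : PhiF adj Vp F = fun v => 1 / 4 * ‖edgeGradient hsym hfin hdeg v‖ ^ 2 +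
      ∑' x, 1 / 2 * (Vp x * v x ^ 2) - ∑' x, F x (v x) := by
    funext v
    rw [PhiF, tsum_gradSq_add_potential hsym hfin hdeg hV, tsum_mul_left]
    ring
  rw [hPhi]
  refine ((hgrad.add hpot).sub (hasFDerivAt_tsum_comp hF hF0 hcont hf u)).congr_fderiv ?_
  congr 2
  ext v
  simp
  ring

theorem fderiv_PhiF_apply_self (hsym : ∀ x y, adj x y → adj y x)
    (hfin : ∀ x, {y | adj x y}.Finite) (hdeg : ∀ x, {y | adj x y}.ncard ≤ D)
    (hV : ∀ x, |Vp x| ≤ C) (hcont : ∀ x, Continuous (f x))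
    (hf : ∀ᶠ t in 𝓝 0, ∀ x, |f x t| ≤ A * |t|)
    (hF : ∀ x t, HasDerivAt (F x) (f x t) t) (hF0 : ∀ x, F x 0 = 0) (u : H1 Vtx) :
    fderiv ℝ (PhiF adj Vp F) u u =
      ∑' x, (gradSq adj u x + Vp x * u x ^ 2) - ∑' x, f x (u x) * u x := by
  have hpot : inner ℝ (nemytskii (eventually_abs_mul_le hV) u) u = ∑' x, Vp x * u x ^ 2 := by
    rw [lp.inner_eq_tsum]
    refine tsum_congr fun x => ?_
    simp
    ring
  have hnon : inner ℝ (nemytskii hf u) u = ∑' x, f x (u x) * u x := by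
    rw [lp.inner_eq_tsum]
    refine tsum_congr fun x => ?_
    simp [mul_comm]
  rw [(hasFDerivAt_PhiF hsym hfin hdeg hV hcont hf hF hF0 u).fderiv,
    tsum_gradSq_add_potential hsym hfin hdeg hV, ← hpot, ← hnon,
    ← real_inner_self_eq_norm_sq]
  rfl

theorem summable_mul_self (hf : ∀ᶠ t in 𝓝 0, ∀ x, |f x t| ≤ A * |t|) (u : H1 Vtx) :
    Summable fun x => f x (u x) * u x :=
  (lp.summable_inner (𝕜 := ℝ) u (nemytskii hf u)).congr fun _ => rfl

theorem fderiv_PhiF_apply_self_le (hsym : ∀ x y, adj x y → adj y x)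
    (hfin : ∀ x, {y | adj x y}.Finite) (hdeg : ∀ x, {y | adj x y}.ncard ≤ D)
    (hV : ∀ x, |Vp x| ≤ C) (hcont : ∀ x, Continuous (f x))
    (hf : ∀ᶠ t in 𝓝 0, ∀ x, |f x t| ≤ A * |t|) (hsmall : ∀ x, f x =o[𝓝 0] id)
    (hmono : ∀ x, MonotoneOn (fun t => f x t / |t|) (Iio 0) ∧
      MonotoneOn (fun t => f x t / |t|) (Ioi 0))
    (hF : ∀ x t, F x t = ∫ s in (0 : ℝ)..t, f x s) (u : H1 Vtx) (x₀ : Vtx) :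
    fderiv ℝ (PhiF adj Vp F) u u ≤ (2 * D + C) * ‖u‖ ^ 2 - 2 * F x₀ (u x₀) := by
  have hderiv (x : Vtx) (t : ℝ) : HasDerivAt (F x) (f x t) t := by
    rw [funext (hF x)]
    exact ((hcont x).integral_hasStrictDerivAt 0 t).hasDerivAt
  have hF0 (x : Vtx) : F x 0 = 0 := by rw [hF, intervalIntegral.integral_same]
  have hprimitive : 2 * F x₀ (u x₀) ≤ f x₀ (u x₀) * u x₀ := by
    rw [hF]
    exact two_mul_integral_le_mul_self (hcont x₀) (hmono x₀).1 (hmono x₀).2 _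
  have hsingle : f x₀ (u x₀) * u x₀ ≤ ∑' x, f x (u x) * u x :=
    (summable_mul_self hf u).le_tsum x₀ fun x _ =>
      mul_self_nonneg_of_monotoneOn_div_abs (hsmall x) (hmono x).1 (hmono x).2 _
  rw [fderiv_PhiF_apply_self hsym hfin hdeg hV hcont hf hderiv hF0]
  exact sub_le_sub (tsum_gradSq_add_potential_le hsym hfin hdeg hV u) (hprimitive.trans hsingle)

theorem tendsto_smul_apply_cobounded {w₀ : H1 Vtx} {x : Vtx} (hx : w₀ x ≠ 0) :
    Tendsto (fun p : ℝ × H1 Vtx => (p.1 • p.2) x) (atTop ×ˢ 𝓝 w₀) (cobounded ℝ) := by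
  have hscale : Tendsto (fun p : ℝ × H1 Vtx => ‖p.1‖) (atTop ×ˢ 𝓝 w₀) atTop :=
    tendsto_norm_atTop_atTop.comp tendsto_fst
  have hcoord : Tendsto (fun p : ℝ × H1 Vtx => ‖p.2 x‖) (atTop ×ˢ 𝓝 w₀) (𝓝 ‖w₀ x‖) :=
    ((H1.continuous_eval x).norm.tendsto w₀).comp tendsto_snd
  rw [← tendsto_norm_atTop_iff_cobounded]
  exact (hscale.atTop_mul_pos (norm_pos_iff.2 hx) hcoord).congr fun p => (norm_mul _ _).symm

theorem eventually_fderiv_PhiF_smul_neg (hsym : ∀ x y, adj x y → adj y x)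
    (hfin : ∀ x, {y | adj x y}.Finite) (hdeg : ∀ x, {y | adj x y}.ncard ≤ D)
    (hV : ∀ x, |Vp x| ≤ C) (hcont : ∀ x, Continuous (f x))
    (hf : ∀ᶠ t in 𝓝 0, ∀ x, |f x t| ≤ A * |t|) (hsmall : ∀ x, f x =o[𝓝 0] id)
    (hmono : ∀ x, MonotoneOn (fun t => f x t / |t|) (Iio 0) ∧
      MonotoneOn (fun t => f x t / |t|) (Ioi 0))
    (hF : ∀ x t, F x t = ∫ s in (0 : ℝ)..t, f x s)
    (hsuper : ∀ x, Tendsto (fun t => F x t / t ^ 2) (cobounded ℝ) atTop) {w₀ : H1 Vtx}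
    (hw₀ : w₀ ≠ 0) :
    ∀ᶠ p : ℝ × H1 Vtx in atTop ×ˢ 𝓝 w₀, fderiv ℝ (PhiF adj Vp F) (p.1 • p.2) (p.1 • p.2) < 0 := by
  obtain ⟨x₀, hx₀⟩ : ∃ x, w₀ x ≠ 0 := by
    by_contra! h
    exact hw₀ (lp.ext (funext h))
  obtain ⟨M, hM⟩ := exists_gt ((2 * D + C) * ‖w₀‖ ^ 2 / w₀ x₀ ^ 2)
  rw [div_lt_iff₀ (sq_pos_of_ne_zero hx₀)] at hM
  have hnear : ∀ᶠ w in 𝓝 w₀, (2 * D + C) * ‖w‖ ^ 2 < M * w x₀ ^ 2 :=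
    (by fun_prop : Continuous fun w : H1 Vtx => (2 * D + C) * ‖w‖ ^ 2).continuousAt.eventually_lt
      (((H1.continuous_eval x₀).pow 2).const_mul M).continuousAt hM
  have hcoord := tendsto_smul_apply_cobounded hx₀
  filter_upwards [(eventually_gt_atTop 0).prod_inl _, hnear.prod_inr _,
    hcoord.eventually (eventually_ne_cobounded 0),
    hcoord.eventually ((hsuper x₀).eventually_ge_atTop (M / 2))] with ⟨s, w⟩ hs hw hne hquot
  have hprimitive := (le_div_iff₀ (sq_pos_of_ne_zero hne)).1 hquot
  calc fderiv ℝ (PhiF adj Vp F) (s • w) (s • w)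
      ≤ (2 * D + C) * ‖s • w‖ ^ 2 - 2 * F x₀ ((s • w) x₀) :=
        fderiv_PhiF_apply_self_le hsym hfin hdeg hV hcont hf hsmall hmono hF _ x₀
    _ ≤ (2 * D + C) * ‖s • w‖ ^ 2 - M * (s • w) x₀ ^ 2 := by linarith
    _ = s ^ 2 * ((2 * D + C) * ‖w‖ ^ 2 - M * w x₀ ^ 2) := by
        rw [norm_smul, mul_pow, Real.norm_eq_abs, sq_abs, lp.coeFn_smul, Pi.smul_apply,
          smul_eq_mul]
        ring
    _ < 0 := mul_neg_of_pos_of_neg (pow_pos hs 2) (sub_neg.2 hw)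

theorem nrmH_zero : nrmH adj Vp 0 = 0 := by
  simp [nrmH, nrmV, gradSq, gammaProd]

end Functional

theorem stmt10_general {Vtx : Type*} {adj : Vtx → Vtx → Prop} {D : ℕ}
    (hsym : ∀ x y, adj x y → adj y x) (hfin : ∀ x, {y | adj x y}.Finite)
    (hdeg : ∀ x, {y | adj x y}.ncard ≤ D) {Vp : Vtx → ℝ} {C : ℝ} (hV : ∀ x, |Vp x| ≤ C)
    {f : Vtx → ℝ → ℝ} (hcont : ∀ x, Continuous (f x)) {A : ℝ}
    (hf : ∀ᶠ t in 𝓝 0, ∀ x, |f x t| ≤ A * |t|) (hsmall : ∀ x, f x =o[𝓝 0] id)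
    (hmono : ∀ x, MonotoneOn (fun t => f x t / |t|) (Iio 0) ∧
      MonotoneOn (fun t => f x t / |t|) (Ioi 0))
    {F : Vtx → ℝ → ℝ} (hF : ∀ x t, F x t = ∫ s in (0 : ℝ)..t, f x s)
    (hsuper : ∀ x, Tendsto (fun t => F x t / t ^ 2) (cobounded ℝ) atTop)
    {K : Set (H1 Vtx)} (hK : IsCompact K) (h0 : 0 ∉ K) :
    ∃ S : ℝ, ∀ w ∈ K, ∀ s > S, fderiv ℝ (PhiF adj Vp F) (s • w) (s • w) < 0 := by
  have hneg : ∀ᶠ p : ℝ × H1 Vtx in atTop ×ˢ 𝓝ˢ K,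
      fderiv ℝ (PhiF adj Vp F) (p.1 • p.2) (p.1 • p.2) < 0 :=
    hK.mem_prod_nhdsSet_of_forall fun w hw =>
      eventually_fderiv_PhiF_smul_neg hsym hfin hdeg hV hcont hf hsmall hmono hF hsuper
        (ne_of_mem_of_not_mem hw h0)
  obtain ⟨S, hS⟩ := eventually_atTop.1 hneg.curry
  exact ⟨S, fun w hw s hs => (hS s hs.le).self_of_nhdsSet w hw⟩

/-- Proposition 3.3 (iii): `s_w` is bounded above on every (norm-)compact subset of the
unit sphere `S`. -/
theorem stmt10
    {Vtx : Type*} (adj : Vtx → Vtx → Prop) (D : ℕ)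
    (hsym : ∀ x y, adj x y → adj y x)
    (hirr : ∀ x, ¬ adj x x)
    (hfin : ∀ x, {y | adj x y}.Finite)
    (hdeg : ∀ x, {y | adj x y}.ncard ≤ D)
    (Vp : Vtx → ℝ) (C1 C2 : ℝ) (hC1 : 0 < C1)
    (hVbd : ∀ x, C1 ≤ Vp x ∧ Vp x ≤ C2)
    (f : Vtx → ℝ → ℝ) (hcont : ∀ x, Continuous (f x))
    (a q : ℝ) (ha : 0 < a) (hq : 2 < q)
    (hgrowth : ∀ x t, |f x t| ≤ a * (|t| + |t| ^ (q - 1)))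
    (hsmall : ∀ ε > 0, ∃ δ > 0, ∀ x t, t ≠ 0 → |t| < δ → |f x t| ≤ ε * |t|)
    (hmono : ∀ x, StrictMonoOn (fun t => f x t / |t|) (Set.Iio 0) ∧
             StrictMonoOn (fun t => f x t / |t|) (Set.Ioi 0))
    (F : Vtx → ℝ → ℝ) (hF : ∀ x t, F x t = ∫ s in (0:ℝ)..t, f x s)
    (hsuper : ∀ M : ℝ, ∃ R > 0, ∀ x t, R ≤ |t| → M ≤ F x t / t ^ 2)
    (sw : H1 Vtx → ℝ)
    (hsw : ∀ w : H1 Vtx, w ≠ 0 → 0 < sw w ∧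
      fderiv ℝ (PhiF adj Vp F) (sw w • w) (sw w • w) = 0 ∧
      ∀ s : ℝ, 0 < s → fderiv ℝ (PhiF adj Vp F) (s • w) (s • w) = 0 → s = sw w)
    :
    ∀ K : Set (H1 Vtx), K ⊆ {w | nrmH adj Vp w = 1} → IsCompact K →
      ∃ C : ℝ, ∀ w ∈ K, sw w ≤ C := by
  intro K hKS hK
  have h0 : (0 : H1 Vtx) ∉ K := fun h => zero_ne_one (nrmH_zero.symm.trans (hKS h))
  have hV (x : Vtx) : |Vp x| ≤ C2 := (abs_of_pos (hC1.trans_le (hVbd x).1)).trans_le (hVbd x).2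
  obtain ⟨C, hC⟩ := stmt10_general hsym hfin hdeg hV hcont
    (eventually_abs_le_mul_abs hcont hsmall one_pos) (isLittleO_id_of_forall_abs_le hcont hsmall)
    (fun x => ⟨(hmono x).1.monotoneOn, (hmono x).2.monotoneOn⟩) hF
    (tendsto_div_sq_cobounded hsuper) hK h0
  refine ⟨C, fun w hw => le_of_not_gt fun hlt => (hC w hw _ hlt).ne ?_⟩
  exact (hsw w (ne_of_mem_of_not_mem hw h0)).2.1
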